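/- Let f be defined by f(x₁,x₂,a) = 1/(x₁ (log x₁)^{3/2}) on {x₁ > 3, |x₂| < 1, e⁻¹ < a < e}, f = c₀ on R₀ = [−1,1]×[−1,1]×[e⁻¹,e], and f = 0 elsewhere, with c₀ chosen so that ∫_G f dρ = 0. For N = 1,2,..., let g_N(x₁,x₂,a) = min(max(log|x₁|, −N), N). Then lim_{N→∞} ∫_G g_N f dρ = +∞. -/

import Mathlib

open MeasureTheory Real Filter Set
open scoped ENNReal

noncomputable section

/-- The group `G = ℝ² ⋊ ℝ⁺`, realized as triples `(x₁, x₂, a)` (only `a > 0` is relevant). -/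
abbrev G : Type := ℝ × ℝ × ℝ

/-- Group product `(x₁,x₂,a)·(x₁',x₂',a') = (x₁+a x₁', x₂+a x₂', a a')`. -/
def gMul (x y : G) : G := (x.1 + x.2.2 * y.1, x.2.1 + x.2.2 * y.2.1, x.2.2 * y.2.2)

/-- Group inverse `(x₁,x₂,a)⁻¹ = (−x₁/a, −x₂/a, 1/a)`. -/
def gInv (x : G) : G := (-x.1 / x.2.2, -x.2.1 / x.2.2, 1 / x.2.2)

/-- The identity `e = (0,0,1)`. -/
def gE : G := (0, 0, 1)

/-- The right Haar measure `dρ = a⁻¹ dx₁ dx₂ da` (supported where `a > 0`). -/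
def ρG : Measure G :=
  (volume : Measure G).withDensity fun x => ENNReal.ofReal (if 0 < x.2.2 then x.2.2⁻¹ else 0)

/-- The modular function `δ(x₁,x₂,a) = a⁻²`. -/
def deltaG (x : G) : ℝ := (x.2.2 ^ 2)⁻¹

/-- `|x| = √(x₁² + x₂²)`. -/
def normG (x : G) : ℝ := Real.sqrt (x.1 ^ 2 + x.2.1 ^ 2)

/-- `cosh r(x) = (a + a⁻¹ + a⁻¹|x|²)/2`. -/
def coshArg (x : G) : ℝ := (x.2.2 + x.2.2⁻¹ + x.2.2⁻¹ * (x.1 ^ 2 + x.2.1 ^ 2)) / 2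

/-- `r(x) ≥ 0` is determined by `cosh r(x) = coshArg x`; explicitly `r = arcosh (coshArg x)`. -/
def rG (x : G) : ℝ := Real.log (coshArg x + Real.sqrt (coshArg x ^ 2 - 1))

/-- The left-invariant distance `d(x,y) = r(x⁻¹y)`. -/
def dG (x y : G) : ℝ := rG (gMul (gInv x) y)

/-- The heat kernel
`p_t(x) = (8π^{3/2})⁻¹ δ(x)^{1/2} (r(x)/sinh r(x)) t^{−3/2} exp(−r(x)²/(4t))`,
with `r/sinh r := 1` at `x = e`. -/
def heatK (t : ℝ) (x : G) : ℝ :=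
  (8 * Real.pi ^ ((3 : ℝ)/2))⁻¹ * Real.sqrt (deltaG x) *
    (if rG x = 0 then 1 else rG x / Real.sinh (rG x)) *
    t ^ (-(3 : ℝ)/2) * Real.exp (-(rG x ^ 2) / (4 * t))

/-- Convolution `f ∗ p_t(x) = ∫ f(xy⁻¹) p_t(y) dρ(y)`. -/
def convHeat (f : G → ℝ) (t : ℝ) (x : G) : ℝ := ∫ y, f (gMul x (gInv y)) * heatK t y ∂ρG

/-- The heat maximal operator `Mf(x) = sup_{t>0} |f ∗ p_t(x)|` (valued in `ℝ≥0∞`). -/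
def maxHeat (f : G → ℝ) (x : G) : ℝ≥0∞ :=
  ⨆ (t : ℝ) (_ : 0 < t), ENNReal.ofReal |convHeat f t x|

/-- Calderón–Zygmund sets. -/
def IsCZ (R : Set G) : Prop :=
  ∃ c : G, ∃ L r : ℝ, 0 < c.2.2 ∧ 0 < L ∧ 0 < r ∧
    R = Set.Icc (c.1 - L/2) (c.1 + L/2) ×ˢ
        (Set.Icc (c.2.1 - L/2) (c.2.1 + L/2) ×ˢ
         Set.Icc (c.2.2 * Real.exp (-r)) (c.2.2 * Real.exp r)) ∧
    (r < 1 → Real.exp 2 * c.2.2 * r ≤ L ∧ L < Real.exp 8 * c.2.2 * r) ∧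
    (1 ≤ r → c.2.2 * Real.exp (2*r) ≤ L ∧ L < c.2.2 * Real.exp (8*r))

/-- Atoms: `A ∈ L¹(ρ)` supported in a Calderón–Zygmund set `R`, with
`‖A‖_∞ ≤ ρ(R)⁻¹` and `∫ A dρ = 0`. -/
def IsAtomG (A : G → ℝ) : Prop :=
  Integrable A ρG ∧
  ∃ R : Set G, IsCZ R ∧ (∀ x ∉ R, A x = 0) ∧
    eLpNorm A ⊤ ρG ≤ (ρG R)⁻¹ ∧
    ∫ x, A x ∂ρG = 0

/-- `f = Σ_j lam_j A_j` with atoms `A_j`, `Σ_j |lam_j| < ∞`, converging in `L¹(ρ)`. -/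
def IsH1Decomp (f : G → ℝ) (lam : ℕ → ℝ) (A : ℕ → G → ℝ) : Prop :=
  (∀ j, IsAtomG (A j)) ∧ Summable (fun j => |lam j|) ∧
  Tendsto (fun N => eLpNorm (fun x => f x - ∑ j ∈ Finset.range N, lam j * A j x) 1 ρG)
    atTop (nhds 0)

/-- The Hardy space `H¹`. -/
def MemH1 (f : G → ℝ) : Prop :=
  Integrable f ρG ∧ ∃ lam A, IsH1Decomp f lam A

/-- `‖f‖_{H¹} = inf Σ_j |lam_j|` over all atomic decompositions. -/
def H1norm (f : G → ℝ) : ℝ :=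
  sInf {s | ∃ lam A, IsH1Decomp f lam A ∧ s = ∑' j, |lam j|}

/-- The left-invariant vector field `X₀ = a ∂_a`. -/
def X0 (f : G → ℝ) (x : G) : ℝ := x.2.2 * deriv (fun s => f (x.1, x.2.1, s)) x.2.2

/-- The left-invariant vector field `X₁ = a ∂_{x₁}`. -/
def X1 (f : G → ℝ) (x : G) : ℝ := x.2.2 * deriv (fun s => f (s, x.2.1, x.2.2)) x.1

/-- The left-invariant vector field `X₂ = a ∂_{x₂}`. -/
def X2 (f : G → ℝ) (x : G) : ℝ := x.2.2 * deriv (fun s => f (x.1, s, x.2.2)) x.2.1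

/-- `‖∇p_t(x)‖`, the Euclidean norm of `(X₀p_t, X₁p_t, X₂p_t)` at `x`. -/
def gradHeatNorm (t : ℝ) (x : G) : ℝ :=
  Real.sqrt (X0 (heatK t) x ^ 2 + X1 (heatK t) x ^ 2 + X2 (heatK t) x ^ 2)

/-- The Poisson kernel `q_t(x) = π⁻² δ(x)^{1/2} (r(x)/sinh r(x)) · t/(t²+r(x)²)²`. -/
def poissonK (t : ℝ) (x : G) : ℝ :=
  (Real.pi ^ 2)⁻¹ * Real.sqrt (deltaG x) *
    (if rG x = 0 then 1 else rG x / Real.sinh (rG x)) *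
    (t / (t ^ 2 + rG x ^ 2) ^ 2)

/-- Convolution `f ∗ q_t(x) = ∫ f(xy⁻¹) q_t(y) dρ(y)`. -/
def convPoisson (f : G → ℝ) (t : ℝ) (x : G) : ℝ := ∫ y, f (gMul x (gInv y)) * poissonK t y ∂ρG

/-- The Poisson maximal operator `M̃f(x) = sup_{t>0} |f ∗ q_t(x)|`. -/
def maxPoisson (f : G → ℝ) (x : G) : ℝ≥0∞ :=
  ⨆ (t : ℝ) (_ : 0 < t), ENNReal.ofReal |convPoisson f t x|

/-- `G_{r₁}(x) = sup_{z ∈ B(x,r₁/2)} sup_{t>0} ‖∇p_t(z)‖`. -/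
def Gsup (r1 : ℝ) (x : G) : ℝ≥0∞ :=
  ⨆ (z : G) (_ : 0 < z.2.2 ∧ dG x z < r1 / 2) (t : ℝ) (_ : 0 < t),
    ENNReal.ofReal (gradHeatNorm t z)

/-- `R₀ = [−1,1]×[−1,1]×[e⁻¹,e]`. -/
def R0set : Set G :=
  Set.Icc (-1 : ℝ) 1 ×ˢ (Set.Icc (-1 : ℝ) 1 ×ˢ Set.Icc (Real.exp (-1)) (Real.exp 1))

/-- `R_L = [L−1,L+1]×[−1,1]×[e⁻¹,e]`. -/
def RLset (L : ℝ) : Set G :=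
  Set.Icc (L - 1) (L + 1) ×ˢ (Set.Icc (-1 : ℝ) 1 ×ˢ Set.Icc (Real.exp (-1)) (Real.exp 1))

/-- `f_L = χ_{R_L} − χ_{R₀}`. -/
def fL (L : ℝ) : G → ℝ := fun x =>
  (RLset L).indicator (fun _ => (1 : ℝ)) x - R0set.indicator (fun _ => (1 : ℝ)) x

/-- The mean of `g` over `R` with respect to `ρ`. -/
def czMean (g : G → ℝ) (R : Set G) : ℝ := (∫ x in R, g x ∂ρG) / (ρG R).toReal

/-- `‖g‖_{BMO} = sup_R ρ(R)⁻¹ ∫_R |g − g_R| dρ` over Calderón–Zygmund sets `R`. -/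
def czBMO (g : G → ℝ) : ℝ≥0∞ :=
  ⨆ (R : Set G) (_ : IsCZ R),
    (ρG R)⁻¹ * ∫⁻ x in R, ENNReal.ofReal |g x - czMean g R| ∂ρG

/-- `‖h‖_{BMO(ℝ)} = sup_Q |Q|⁻¹ ∫_Q |h − h_Q|` over bounded intervals `Q ⊂ ℝ`. -/
def lineBMO (h : ℝ → ℝ) : ℝ≥0∞ :=
  ⨆ (a : ℝ) (b : ℝ) (_ : a < b),
    (ENNReal.ofReal (b - a))⁻¹ *
      ∫⁻ s in Set.Icc a b, ENNReal.ofReal |h s - (∫ u in Set.Icc a b, h u) / (b - a)|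

/-- `2R₀ = [−2,2]×[−2,2]×[e⁻²,e²]`. -/
def twoR0set : Set G :=
  Set.Icc (-2 : ℝ) 2 ×ˢ (Set.Icc (-2 : ℝ) 2 ×ˢ Set.Icc (Real.exp (-2)) (Real.exp 2))

/-- The set `{x₁ > 3, |x₂| < 1, e⁻¹ < a < e}`. -/
def domSpecial : Set G :=
  {x : G | 3 < x.1 ∧ |x.2.1| < 1 ∧ Real.exp (-1) < x.2.2 ∧ x.2.2 < Real.exp 1}

/-- The function equal to `1/(x₁ (log x₁)^{3/2})` on `{x₁ > 3, |x₂| < 1, e⁻¹ < a < e}`,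
to `c₀` on `R₀`, and `0` elsewhere. -/
def fSpecial (c0 : ℝ) : G → ℝ := fun x =>
  domSpecial.indicator (fun y => (y.1 * Real.log y.1 ^ ((3 : ℝ)/2))⁻¹) x
    + R0set.indicator (fun _ => c0) x

/-! The integrand is the product of a function of `x₁` and the indicator of a box, so its integral
is four times an integral over the line. The mass of `1 / (t (log t)^{3/2})` beyond `e^N` is
`2 N^{-1/2}`, and `g_N = N` there: this region alone contributes a multiple of `N^{1/2}`. The
contribution of `R₀` converges, because `log |t|` is integrable near `0`. -/

section Truncation

theorem abs_min_max_neg {α : Type*} [AddCommGroup α] [LinearOrder α] [IsOrderedAddMonoid α]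
    {r : α} (hr : 0 ≤ r) (a : α) : |min (max a (-r)) r| = min |a| r := by
  have hneg : -r ≤ r := (neg_nonpos.2 hr).trans hr
  rcases le_total 0 a with ha | ha
  · rw [max_eq_left ((neg_nonpos.2 hr).trans ha), abs_of_nonneg (le_min ha hr), abs_of_nonneg ha]
  · rw [min_eq_left (max_le (ha.trans hr) hneg),
      abs_of_nonpos (max_le ha (neg_nonpos.2 hr)), abs_of_nonpos ha,
      ← min_neg_neg, neg_neg]

variable {α : Type*} [MeasurableSpace α] {μ : Measure α} {f : α → ℝ}

theorem aestronglyMeasurable_min_max_neg (hf : AEStronglyMeasurable f μ) (r : ℝ) :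
    AEStronglyMeasurable (fun x => min (max (f x) (-r)) r) μ :=
  (hf.sup aestronglyMeasurable_const).inf aestronglyMeasurable_const

theorem integrable_min_max_neg (hf : Integrable f μ) {r : ℝ} (hr : 0 ≤ r) :
    Integrable (fun x => min (max (f x) (-r)) r) μ :=
  hf.mono (aestronglyMeasurable_min_max_neg hf.1 r) <| ae_of_all _ fun x => by
    simpa only [norm_eq_abs, abs_min_max_neg hr] using min_le_left |f x| r

theorem tendsto_integral_min_max_neg (hf : Integrable f μ) :
    Tendsto (fun r : ℝ => ∫ x, min (max (f x) (-r)) r ∂μ) atTop (nhds (∫ x, f x ∂μ)) := by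
  refine tendsto_integral_filter_of_dominated_convergence (fun x => |f x|)
    (Eventually.of_forall fun r => aestronglyMeasurable_min_max_neg hf.1 r) ?_ hf.abs
    (ae_of_all _ fun x => ?_)
  · filter_upwards [eventually_ge_atTop 0] with r hr
    refine ae_of_all _ fun x => ?_
    rw [norm_eq_abs, abs_min_max_neg hr]
    exact min_le_left _ _
  · refine tendsto_const_nhds.congr' ?_
    filter_upwards [eventually_ge_atTop |f x|] with r hr
    obtain ⟨hneg, hle⟩ := abs_le.1 hr
    rw [max_eq_left hneg, min_eq_left hle]

end Truncation

section LogPower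

variable {p b t : ℝ}

theorem inv_mul_log_rpow_nonneg (ht : 1 ≤ t) : 0 ≤ (t * log t ^ p)⁻¹ := by
  have := log_nonneg ht
  positivity

theorem hasDerivAt_neg_log_rpow_div (hp : 1 < p) (ht : 1 < t) :
    HasDerivAt (fun t => -(log t ^ (1 - p) / (p - 1))) (t * log t ^ p)⁻¹ t := by
  have hlog : 0 < log t := log_pos ht
  have hpow := (hasDerivAt_log (by positivity : t ≠ 0)).rpow_const (p := 1 - p) (Or.inl hlog.ne')
  refine (hpow.div_const (p - 1)).neg.congr_deriv ?_
  rw [show 1 - p - 1 = -p by ring, rpow_neg hlog.le, mul_inv]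
  have : p - 1 ≠ 0 := by linarith
  field_simp
  ring

theorem tendsto_neg_log_rpow_div (hp : 1 < p) :
    Tendsto (fun t => -(log t ^ (1 - p) / (p - 1))) atTop (nhds 0) := by
  have h := (tendsto_rpow_neg_atTop (sub_pos.2 hp)).comp tendsto_log_atTop
  simpa [Function.comp_def] using (h.div_const (p - 1)).neg

theorem integrableOn_Ioi_inv_mul_log_rpow (hp : 1 < p) (hb : 1 < b) :
    IntegrableOn (fun t => (t * log t ^ p)⁻¹) (Ioi b) :=
  integrableOn_Ioi_deriv_of_nonneg' (fun _ ht => hasDerivAt_neg_log_rpow_div hp (hb.trans_le ht))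
    (fun _ ht => inv_mul_log_rpow_nonneg (hb.trans ht).le) (tendsto_neg_log_rpow_div hp)

theorem integral_Ioi_inv_mul_log_rpow (hp : 1 < p) (hb : 1 < b) :
    ∫ t in Ioi b, (t * log t ^ p)⁻¹ = log b ^ (1 - p) / (p - 1) := by
  rw [integral_Ioi_of_hasDerivAt_of_nonneg'
    (fun _ ht => hasDerivAt_neg_log_rpow_div hp (hb.trans_le ht))
    (fun _ ht => inv_mul_log_rpow_nonneg (hb.trans ht).le) (tendsto_neg_log_rpow_div hp)]
  ring

theorem integrableOn_min_max_log_mul_inv_mul_log_rpow (hp : 1 < p) (hb : 1 < b) {r : ℝ}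
    (hr : 0 ≤ r) :
    IntegrableOn (fun t => min (max (log |t|) (-r)) r * (t * log t ^ p)⁻¹) (Ioi b) := by
  have hlog : AEStronglyMeasurable (fun t => log |t|) (volume.restrict (Ioi b)) :=
    (measurable_log.comp measurable_norm).aestronglyMeasurable
  refine (integrableOn_Ioi_inv_mul_log_rpow hp hb).bdd_mul (c := r)
    (aestronglyMeasurable_min_max_neg hlog r) (ae_of_all _ fun t => ?_)
  rw [norm_eq_abs, abs_min_max_neg hr]
  exact min_le_right _ _

theorem rpow_div_le_integral_min_max_log_mul (hp : 1 < p) (hb : 1 < b) {r : ℝ}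
    (hr : log b ≤ r) :
    r ^ (2 - p) / (p - 1) ≤
      ∫ t in Ioi b, min (max (log |t|) (-r)) r * (t * log t ^ p)⁻¹ := by
  have hr0 : 0 < r := (log_pos hb).trans_le hr
  have hbr : b ≤ exp r := (log_le_iff_le_exp (by positivity)).1 hr
  have htail : ∀ t ∈ Ioi (exp r), min (max (log |t|) (-r)) r = r := fun t ht => by
    have : r ≤ log |t| := by
      rw [log_abs, le_log_iff_exp_le ((exp_pos r).trans ht)]
      exact ht.le
    exact min_eq_right (le_max_of_le_left this)
  have hnonneg : ∀ t ∈ Ioi b, 0 ≤ min (max (log |t|) (-r)) r * (t * log t ^ p)⁻¹ := fun t ht => by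
    have hlog : 0 ≤ log |t| := log_abs t ▸ log_nonneg (hb.trans ht).le
    exact mul_nonneg (le_min (le_max_of_le_left hlog) hr0.le)
      (inv_mul_log_rpow_nonneg (hb.trans ht).le)
  calc r ^ (2 - p) / (p - 1) = r * (r ^ (1 - p) / (p - 1)) := by
        rw [show 2 - p = 1 + (1 - p) by ring, rpow_add hr0, rpow_one, mul_div_assoc]
    _ = ∫ t in Ioi (exp r), r * (t * log t ^ p)⁻¹ := by
        rw [integral_const_mul, integral_Ioi_inv_mul_log_rpow hp (hb.trans_le hbr), log_exp]
    _ = ∫ t in Ioi (exp r), min (max (log |t|) (-r)) r * (t * log t ^ p)⁻¹ :=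
        setIntegral_congr_fun measurableSet_Ioi fun t ht => by simp only [htail t ht]
    _ ≤ ∫ t in Ioi b, min (max (log |t|) (-r)) r * (t * log t ^ p)⁻¹ :=
        setIntegral_mono_set (integrableOn_min_max_log_mul_inv_mul_log_rpow hp hb hr0.le)
          (ae_restrict_of_forall_mem measurableSet_Ioi hnonneg)
          (Ioi_subset_Ioi hbr).eventuallyLE

theorem tendsto_integral_min_max_log_mul_inv_mul_log_rpow (hp : 1 < p) (hp' : p < 2)
    (hb : 1 < b) :
    Tendsto (fun r => ∫ t in Ioi b, min (max (log |t|) (-r)) r * (t * log t ^ p)⁻¹)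
      atTop atTop := by
  refine tendsto_atTop_mono' atTop ?_
    ((tendsto_rpow_atTop (sub_pos.2 hp')).atTop_div_const (sub_pos.2 hp))
  filter_upwards [eventually_ge_atTop (log b)] with r hr
  exact rpow_div_le_integral_min_max_log_mul hp hb hr

end LogPower

theorem integrableOn_Icc_log_abs (a b : ℝ) : IntegrableOn (fun t => log |t|) (Icc a b) := by
  simp only [log_abs]
  exact (intervalIntegrable_iff' (by simp)).1 intervalIntegral.intervalIntegrable_log'
    |>.mono_set Icc_subset_uIcc

section Cylinder

variable {α β E : Type*} [MeasurableSpace α] [MeasurableSpace β] [NormedAddCommGroup E]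
  {μ : Measure α} {ν : Measure β} [SFinite μ] [SFinite ν]

theorem integrableOn_prod_comp_fst {f : α → E} {s : Set α} {t : Set β} (hf : IntegrableOn f s μ)
    (ht : ν t ≠ ∞) : IntegrableOn (fun z : α × β => f z.1) (s ×ˢ t) (μ.prod ν) := by
  have : IsFiniteMeasure (ν.restrict t) := isFiniteMeasure_restrict.2 ht
  rw [IntegrableOn, ← Measure.prod_restrict]
  exact Integrable.comp_fst hf _

theorem setIntegral_prod_comp_fst [NormedSpace ℝ E] (f : α → E) (s : Set α) (t : Set β) :
    ∫ z in s ×ˢ t, f z.1 ∂μ.prod ν = ν.real t • ∫ x in s, f x ∂μ := by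
  rw [← Measure.prod_restrict, integral_fun_fst, measureReal_restrict_apply_univ]

end Cylinder

section RightHaar

/-- The Haar measure `a⁻¹ da` of the multiplicative group `ℝ⁺`, extended by zero to `ℝ`. -/
def dilationHaar : Measure ℝ :=
  volume.withDensity fun a => ENNReal.ofReal (if 0 < a then a⁻¹ else 0)

instance : SFinite dilationHaar := by unfold dilationHaar; infer_instance

theorem measurable_dilationHaar_density :
    Measurable fun a : ℝ => ENNReal.ofReal (if 0 < a then a⁻¹ else 0) :=
  (Measurable.ite measurableSet_Ioi measurable_inv measurable_const).ennreal_ofReal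

theorem ρG_eq_prod : ρG = volume.prod (volume.prod dilationHaar) := by
  rw [dilationHaar, prod_withDensity_right measurable_dilationHaar_density,
    prod_withDensity_right (g := fun z : ℝ × ℝ => ENNReal.ofReal (if 0 < z.2 then z.2⁻¹ else 0))
      (measurable_dilationHaar_density.comp measurable_snd)]
  rfl

variable {a b : ℝ}

theorem dilationHaar_Icc (ha : 0 < a) (hab : a ≤ b) :
    dilationHaar (Icc a b) = ENNReal.ofReal (log (b / a)) := by
  have hpos : ∀ x ∈ Icc a b, 0 < x := fun x hx => ha.trans_le hx.1
  have hint : IntegrableOn (fun x : ℝ => x⁻¹) (Icc a b) :=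
    (continuousOn_inv₀.mono fun x hx => (hpos x hx).ne').integrableOn_Icc
  calc dilationHaar (Icc a b)
      = ∫⁻ x in Icc a b, ENNReal.ofReal x⁻¹ := by
        rw [dilationHaar, withDensity_apply _ measurableSet_Icc]
        exact setLIntegral_congr_fun measurableSet_Icc fun x hx => by
          simp only [if_pos (hpos x hx)]
    _ = ENNReal.ofReal (∫ x in Icc a b, x⁻¹) :=
        (ofReal_integral_eq_lintegral_ofReal hint <|
          ae_restrict_of_forall_mem measurableSet_Icc fun x hx => (inv_pos.2 (hpos x hx)).le).symm
    _ = ENNReal.ofReal (log (b / a)) := by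
        rw [integral_Icc_eq_integral_Ioc, ← intervalIntegral.integral_of_le hab,
          integral_inv_of_pos ha (ha.trans_le hab)]

theorem dilationHaar_Ioo (ha : 0 < a) (hab : a ≤ b) :
    dilationHaar (Ioo a b) = ENNReal.ofReal (log (b / a)) :=
  (measure_congr ((withDensity_absolutelyContinuous _ _).ae_eq Ioo_ae_eq_Icc)).trans
    (dilationHaar_Icc ha hab)

theorem log_exp_one_div_exp_neg_one : log (exp 1 / exp (-1)) = 2 := by
  rw [← exp_sub, log_exp]
  norm_num

theorem volume_prod_dilationHaar_Icc :
    (volume.prod dilationHaar) (Icc (-1 : ℝ) 1 ×ˢ Icc (exp (-1)) (exp 1)) = 4 := by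
  rw [Measure.prod_prod, volume_Icc, dilationHaar_Icc (exp_pos _) (by simp),
    log_exp_one_div_exp_neg_one, ← ENNReal.ofReal_mul (by norm_num)]
  norm_num

theorem volume_prod_dilationHaar_Ioo :
    (volume.prod dilationHaar) (Ioo (-1 : ℝ) 1 ×ˢ Ioo (exp (-1)) (exp 1)) = 4 := by
  rw [Measure.prod_prod, volume_Ioo, dilationHaar_Ioo (exp_pos _) (by simp),
    log_exp_one_div_exp_neg_one, ← ENNReal.ofReal_mul (by norm_num)]
  norm_num

end RightHaar

theorem domSpecial_eq_prod :
    domSpecial = Ioi 3 ×ˢ (Ioo (-1) 1 ×ˢ Ioo (exp (-1)) (exp 1)) := by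
  ext x
  simp [domSpecial, abs_lt]

theorem measurableSet_domSpecial : MeasurableSet domSpecial :=
  domSpecial_eq_prod ▸ measurableSet_Ioi.prod (measurableSet_Ioo.prod measurableSet_Ioo)

theorem measurableSet_R0set : MeasurableSet R0set :=
  measurableSet_Icc.prod (measurableSet_Icc.prod measurableSet_Icc)

theorem comp_fst_mul_fSpecial (w : ℝ → ℝ) (c0 : ℝ) (x : G) :
    w x.1 * fSpecial c0 x =
      domSpecial.indicator (fun y => w y.1 * (y.1 * log y.1 ^ ((3 : ℝ) / 2))⁻¹) x +
        R0set.indicator (fun y => c0 * w y.1) x := by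
  simp only [fSpecial, indicator, mul_add, mul_ite, mul_zero, mul_comm c0]

theorem integral_comp_fst_mul_fSpecial {w : ℝ → ℝ} (c0 : ℝ)
    (hdom : IntegrableOn (fun t => w t * (t * log t ^ ((3 : ℝ) / 2))⁻¹) (Ioi 3))
    (hR0 : IntegrableOn w (Icc (-1) 1)) :
    ∫ x, w x.1 * fSpecial c0 x ∂ρG =
      4 * ((∫ t in Ioi 3, w t * (t * log t ^ ((3 : ℝ) / 2))⁻¹) +
        c0 * ∫ t in Icc (-1) 1, w t) := by
  have hdom' := integrableOn_prod_comp_fst hdom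
    (volume_prod_dilationHaar_Ioo ▸ ENNReal.ofNat_ne_top)
  have hR0' := integrableOn_prod_comp_fst (hR0.const_mul c0)
    (volume_prod_dilationHaar_Icc ▸ ENNReal.ofNat_ne_top)
  rw [← domSpecial_eq_prod, ← ρG_eq_prod] at hdom'
  rw [← R0set, ← ρG_eq_prod] at hR0'
  simp only [comp_fst_mul_fSpecial]
  rw [integral_add (hdom'.integrable_indicator measurableSet_domSpecial)
      (hR0'.integrable_indicator measurableSet_R0set),
    integral_indicator measurableSet_domSpecial, integral_indicator measurableSet_R0set,
    domSpecial_eq_prod, R0set, ρG_eq_prod,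
    setIntegral_prod_comp_fst (fun t => w t * (t * log t ^ ((3 : ℝ) / 2))⁻¹),
    setIntegral_prod_comp_fst (fun t => c0 * w t),
    Measure.real, Measure.real, volume_prod_dilationHaar_Ioo, volume_prod_dilationHaar_Icc,
    integral_const_mul]
  simp only [ENNReal.toReal_ofNat, smul_eq_mul]
  ring

theorem integral_gN_fSpecial_tendsto_atTop_general (c0 : ℝ) :
    Tendsto (fun N : ℕ =>
        ∫ x, min (max (Real.log |x.1|) (-(N : ℝ))) (N : ℝ) * fSpecial c0 x ∂ρG)
      atTop atTop := by
  have hlog := integrableOn_Icc_log_abs (-1) 1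
  have hdom := tendsto_integral_min_max_log_mul_inv_mul_log_rpow (p := 3 / 2) (b := 3)
    (by norm_num) (by norm_num) (by norm_num)
  have hR0 := (tendsto_integral_min_max_neg hlog).const_mul c0
  have hsum := (hdom.atTop_add hR0).const_mul_atTop (four_pos (α := ℝ))
  refine (hsum.comp tendsto_natCast_atTop_atTop).congr fun N => Eq.symm ?_
  exact integral_comp_fst_mul_fSpecial c0
    (integrableOn_min_max_log_mul_inv_mul_log_rpow (by norm_num) (by norm_num) N.cast_nonneg)
    (integrable_min_max_neg hlog N.cast_nonneg)

theorem integral_gN_fSpecial_tendsto_atTop :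
    ∀ c0 : ℝ, (∫ x, fSpecial c0 x ∂ρG) = 0 →
      Tendsto (fun N : ℕ =>
          ∫ x, min (max (Real.log |x.1|) (-(N : ℝ))) (N : ℝ) * fSpecial c0 x ∂ρG)
        atTop atTop :=
  fun c0 _ => integral_gN_fSpecial_tendsto_atTop_general c0
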